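/- arXiv:1606.01986 — 3 statements merged into one kernel-verified Lean document; each statement's English description precedes it below -/
import Mathlib

section
/- For every real number z ≥ 0, the continuous Catalan function satisfies the convolution identity ∫_{0}^{z} C(x) C(z−x) dx = 4 C′(z), where C′ denotes the derivative of C. -/
/-- The one-variable continuous Catalan function `C(x) = 2 I₁(x)/x`. -/
noncomputable def contCatalanFn (x : ℝ) : ℝ :=
  ∑' n : ℕ, (x / 2) ^ (2 * n) / ((n.factorial : ℝ) * ((n + 1).factorial : ℝ))

theorem aux_beta (z : ℝ) (b : ℕ) : ∀ a : ℕ, ∫ x in (0:ℝ)..z, x ^ a * (z - x) ^ b =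
    (a.factorial : ℝ) * b.factorial / (a + b + 1).factorial * z ^ (a + b + 1) := by
  induction b with
  | zero =>
    intro a
    have h1 : ((a + 1 : ℕ) : ℝ) ≠ 0 := by positivity
    have h2 : (a.factorial : ℝ) ≠ 0 := by positivity
    simp only [pow_zero, mul_one, integral_pow, add_zero, Nat.factorial_succ, Nat.factorial_zero]
    push_cast at *
    field_simp
    simp
  | succ b ih =>
    intro a
    have hd : ∀ x ∈ Set.uIcc 0 z, HasDerivAt (fun x : ℝ => x ^ (a + 1) * (z - x) ^ (b + 1))
        ((a + 1 : ℝ) * (x ^ a * (z - x) ^ (b + 1)) - (b + 1 : ℝ) * (x ^ (a + 1) * (z - x) ^ b)) x := by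
      intro x _
      have h1 := hasDerivAt_pow (a + 1) x
      have h2 := ((hasDerivAt_id x).const_sub z).pow (b + 1)
      refine (h1.mul h2).congr_deriv ?_
      simp
      ring
    have hi := intervalIntegral.integral_eq_sub_of_hasDerivAt hd
      (Continuous.intervalIntegrable (by fun_prop) _ _)
    rw [intervalIntegral.integral_sub (Continuous.intervalIntegrable (by fun_prop) _ _)
      (Continuous.intervalIntegrable (by fun_prop) _ _), intervalIntegral.integral_const_mul,
      intervalIntegral.integral_const_mul, ih] at hi
    simp only [sub_self, ne_eq, Nat.add_eq_zero_iff, one_ne_zero, and_false, not_false_eq_true,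
      zero_pow, mul_zero, zero_mul] at hi
    have e : a + (b + 1) + 1 = a + 1 + b + 1 := by ring
    rw [e, Nat.factorial_succ b]
    rw [Nat.factorial_succ a] at hi
    have h3 : ((a + 1 + b + 1).factorial : ℝ) ≠ 0 := by positivity
    have h4 : (a + 1 : ℝ) ≠ 0 := by positivity
    apply mul_left_cancel₀ h4
    rw [sub_eq_zero.mp hi]
    push_cast
    ring

theorem aux_summable (x : ℝ) : Summable fun n : ℕ =>
    (x / 2) ^ (2 * n) / ((n.factorial : ℝ) * ((n + 1).factorial : ℝ)) := by
  refine Summable.of_nonneg_of_le (fun n => ?_) (fun n => ?_)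
    (Real.summable_pow_div_factorial ((x / 2) ^ 2))
  · rw [pow_mul]; positivity
  · rw [← pow_mul]
    have h1 : (1 : ℝ) ≤ (n + 1).factorial := by exact_mod_cast Nat.factorial_pos _
    have h2 : (0 : ℝ) < n.factorial := by positivity
    apply div_le_div_of_nonneg_left _ h2
    · nlinarith
    · rw [pow_mul]; positivity

theorem aux_deriv (z : ℝ) : HasDerivAt contCatalanFn
    (∑' n : ℕ, (n : ℝ) * (z / 2) ^ (2 * n - 1) / ((n.factorial : ℝ) * ((n + 1).factorial : ℝ))) z ∧
    Summable (fun n : ℕ =>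
      (n : ℝ) * (z / 2) ^ (2 * n - 1) / ((n.factorial : ℝ) * ((n + 1).factorial : ℝ))) := by
  set R : ℝ := |z| + 2 with hR
  have hb : ∀ (n : ℕ) (y : ℝ), y ∈ Metric.ball (0:ℝ) R →
      ‖(n : ℝ) * (y / 2) ^ (2 * n - 1) / ((n.factorial : ℝ) * ((n + 1).factorial : ℝ))‖ ≤
      ((R / 2) ^ 2) ^ n / n.factorial := by
    intro n y hy
    have hy' : |y| ≤ R := by simpa using (mem_ball_zero_iff.mp hy).le
    have hR1 : 1 ≤ R / 2 := by rw [hR]; linarith [abs_nonneg z]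
    have h1 : (n : ℝ) ≤ (n + 1).factorial := by
      exact_mod_cast (Nat.le_succ n).trans (Nat.self_le_factorial _)
    have h2 : |y / 2| ^ (2 * n - 1) ≤ (R / 2) ^ (2 * n) := by
      calc |y / 2| ^ (2 * n - 1) ≤ (R / 2) ^ (2 * n - 1) := by
            apply pow_le_pow_left₀ (abs_nonneg _)
            rw [abs_div, abs_two]; linarith
        _ ≤ _ := pow_le_pow_right₀ hR1 (by omega)
    rw [Real.norm_eq_abs, abs_div, abs_mul, abs_mul, abs_pow, Nat.abs_cast, Nat.abs_cast,
      Nat.abs_cast, ← pow_mul, div_le_div_iff₀ (by positivity) (by positivity)]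
    calc (n : ℝ) * |y / 2| ^ (2 * n - 1) * n.factorial
        ≤ (n + 1).factorial * (R / 2) ^ (2 * n) * n.factorial := by gcongr
      _ = _ := by ring
  have hz : z ∈ Metric.ball (0:ℝ) R := by
    rw [mem_ball_zero_iff, Real.norm_eq_abs, hR]; linarith
  have hs := Real.summable_pow_div_factorial ((R / 2) ^ 2)
  constructor
  · refine hasDerivAt_tsum_of_isPreconnected (𝕜 := ℝ) (g := fun (n : ℕ) (x : ℝ) =>
      (x / 2) ^ (2 * n) / ((n.factorial : ℝ) * ((n + 1).factorial : ℝ)))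
      (g' := fun (n : ℕ) (y : ℝ) => (n : ℝ) * (y / 2) ^ (2 * n - 1) /
        ((n.factorial : ℝ) * ((n + 1).factorial : ℝ))) hs
      Metric.isOpen_ball (convex_ball (0:ℝ) R).isPreconnected ?_ hb hz (aux_summable z) hz
    intro n y _
    have h := (((hasDerivAt_id y).div_const 2).pow (2 * n)).div_const
      ((n.factorial : ℝ) * ((n + 1).factorial : ℝ))
    refine h.congr_deriv ?_
    simp
    ring
  · exact Summable.of_norm_bounded hs (fun n => hb n z hz)

theorem aux_catalan (n : ℕ) : (catalan n : ℝ) =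
    ((2 * n).factorial : ℝ) / ((n.factorial : ℝ) * ((n + 1).factorial : ℝ)) := by
  have h := succ_mul_catalan_eq_centralBinom n
  have h2 := Nat.choose_mul_factorial_mul_factorial (show n ≤ 2 * n by omega)
  rw [show 2 * n - n = n by omega, ← Nat.centralBinom_eq_two_mul_choose, ← h] at h2
  rw [eq_div_iff (by positivity), ← h2, Nat.factorial_succ]
  push_cast
  ring

theorem contCatalanFn_convolution (z : ℝ) (hz : 0 ≤ z) :
    (∫ x in (0 : ℝ)..z, contCatalanFn x * contCatalanFn (z - x)) =
      4 * deriv contCatalanFn z := by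
  obtain ⟨hd, hsum⟩ := aux_deriv z
  rw [hd.deriv, hsum.tsum_eq_zero_add]
  simp only [Nat.cast_zero, zero_mul, zero_div, zero_add]
  let t : ℝ → ℕ → ℝ := fun x n =>
    (x / 2) ^ (2 * n) / ((n.factorial : ℝ) * ((n + 1).factorial : ℝ))
  have htn : ∀ x, Summable fun n => ‖t x n‖ := fun x => (aux_summable x).norm
  have key := intervalIntegral.hasSum_integral_of_dominated_convergence
    (μ := MeasureTheory.volume) (a := 0) (b := z)
    (F := fun (n : ℕ) (x : ℝ) => ∑ p ∈ Finset.HasAntidiagonal.antidiagonal n, t x p.1 * t (z - x) p.2)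
    (f := fun x => contCatalanFn x * contCatalanFn (z - x))
    (fun n _ => ∑ p ∈ Finset.HasAntidiagonal.antidiagonal n, t z p.1 * t z p.2)
    (fun n => by
      apply Continuous.aestronglyMeasurable
      simp only [t]
      fun_prop)
    (fun n => by
      refine Filter.Eventually.of_forall fun x hx => ?_
      rw [Set.uIoc_of_le hz] at hx
      refine (norm_sum_le _ _).trans (Finset.sum_le_sum fun p _ => ?_)
      have hm : ∀ y, 0 ≤ y → y ≤ z → ∀ k, |t y k| ≤ t z k := by
        intro y hy hyz k
        simp only [t]
        rw [abs_of_nonneg (by positivity)]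
        gcongr
      rw [norm_mul]
      exact mul_le_mul (hm x hx.1.le hx.2 _) (hm (z - x) (by linarith [hx.2]) (by linarith [hx.1]) _)
        (abs_nonneg _) ((abs_nonneg _).trans (hm x hx.1.le hx.2 _)))
    (Filter.Eventually.of_forall fun x _ =>
      (summable_norm_sum_mul_antidiagonal_of_summable_norm (htn z) (htn z)).of_norm)
    (by simp)
    (Filter.Eventually.of_forall fun x _ => by
      have h1 := tsum_mul_tsum_eq_tsum_sum_antidiagonal_of_summable_norm (htn x) (htn (z - x))
      have h2 := (summable_norm_sum_mul_antidiagonal_of_summable_norm (htn x) (htn (z - x))).of_norm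
      have h3 := h2.hasSum
      rw [← h1] at h3
      exact h3)
  rw [← key.tsum_eq, ← tsum_mul_left]
  congr 1
  funext n
  rw [intervalIntegral.integral_finsetSum (fun p _ =>
    Continuous.intervalIntegrable (by simp only [t]; fun_prop) _ _)]
  have hterm : ∀ p ∈ Finset.HasAntidiagonal.antidiagonal n, ∫ x in (0:ℝ)..z, t x p.1 * t (z - x) p.2 =
      ((catalan p.1 : ℝ) * catalan p.2) * ((1 / 2) ^ (2 * n) / (2 * n + 1).factorial * z ^ (2 * n + 1)) := by
    rintro ⟨i, j⟩ hp
    rw [Finset.HasAntidiagonal.mem_antidiagonal] at hp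
    simp only at hp ⊢
    have e : (fun x : ℝ => t x i * t (z - x) j) = fun x : ℝ =>
        ((1 / 2) ^ (2 * n) / ((i.factorial : ℝ) * (i + 1).factorial) /
          ((j.factorial : ℝ) * (j + 1).factorial)) * (x ^ (2 * i) * (z - x) ^ (2 * j)) := by
      funext x
      simp only [t, ← hp, div_pow, mul_add, pow_add, one_pow]
      field_simp
    rw [e, intervalIntegral.integral_const_mul, aux_beta, aux_catalan, aux_catalan,
      ← mul_add, hp]
    field_simp
  rw [Finset.sum_congr rfl hterm, ← Finset.sum_mul]
  have hc : (∑ p ∈ Finset.HasAntidiagonal.antidiagonal n, (catalan p.1 : ℝ) * catalan p.2) = catalan (n + 1) := by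
    rw [catalan_succ']; push_cast; rfl
  rw [hc, aux_catalan, show 2 * (n + 1) - 1 = 2 * n + 1 by omega,
    show 2 * (n + 1) = 2 * n + 1 + 1 by ring, Nat.factorial_succ (2 * n + 1)]
  simp only [div_pow, one_pow, pow_succ]
  push_cast
  field_simp
  ring
end

section
/- For every real number s ≥ 0, the continuous central binomial coefficients satisfy the convolution identity ∫_{0}^{s} {2u choose u} {2(s−u) choose s−u} du = 4 e^{2s} − 2 {2s choose s}. -/
/-- The continuous binomial coefficient `{x choose s}`. -/
noncomputable def cbinom (x s : ℝ) : ℝ :=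
  ∑' n : ℕ, (s * (x - s)) ^ n *
    (2 / ((n.factorial : ℝ)) ^ 2 + x / ((n.factorial : ℝ) * ((n + 1).factorial : ℝ)))

noncomputable def cA (m : ℕ) : ℝ := (m.choose (m / 2) : ℝ)

lemma cA_even (k : ℕ) : cA (2 * k) = (k.centralBinom : ℝ) := by
  unfold cA
  rw [Nat.centralBinom_eq_two_mul_choose]
  congr 2
  omega

lemma cA_odd (k : ℕ) : 2 * cA (2 * k + 1) = ((k + 1).centralBinom : ℝ) := by
  unfold cA
  rw [Nat.centralBinom_eq_two_mul_choose]
  have h1 : (2 * k + 1) / 2 = k := by omega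
  have h2 : 2 * (k + 1) = (2 * k + 1) + 1 := by ring
  rw [h1, h2, Nat.choose_succ_succ, Nat.choose_symm_half]
  push_cast
  ring

lemma cA_rec (n : ℕ) : ((n : ℝ) + 3) * cA (n + 2) = 4 * ((n : ℝ) + 1) * cA n + 2 * cA (n + 1) := by
  rcases Nat.even_or_odd' n with ⟨k, rfl | rfl⟩
  · have h0 := cA_even k
    have h1 := cA_odd k
    have h2 := cA_even (k + 1)
    have h3 : ((k : ℝ) + 1) * ((k + 1).centralBinom : ℝ) = 2 * (2 * k + 1) * (k.centralBinom : ℝ) := by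
      exact_mod_cast Nat.succ_mul_centralBinom_succ k
    have e : 2 * (k + 1) = 2 * k + 2 := by ring
    rw [e] at h2
    rw [h1, h2, h0]
    push_cast
    linarith
  · have h0 := cA_odd k
    have h1 := cA_even (k + 1)
    have h2 := cA_odd (k + 1)
    have h3 : ((k : ℝ) + 1 + 1) * ((k + 1 + 1).centralBinom : ℝ)
        = 2 * (2 * (k + 1) + 1) * ((k + 1).centralBinom : ℝ) := by
      exact_mod_cast Nat.succ_mul_centralBinom_succ (k + 1)
    have e : 2 * (k + 1) = 2 * k + 2 := by ring
    rw [e] at h1 h2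
    have e3 : 2 * k + 1 + 2 = 2 * k + 2 + 1 := by ring
    have e4 : 2 * k + 1 + 1 = 2 * k + 2 := by ring
    rw [e3, e4, h1]
    push_cast
    linear_combination (k + 2 : ℝ) * h2 + h3 - 4 * (k + 1 : ℝ) * h0

lemma cA_nonneg (m : ℕ) : 0 ≤ cA m := by unfold cA; positivity

lemma cA_le (m : ℕ) : cA m ≤ 2 ^ m := by
  unfold cA
  exact_mod_cast Nat.choose_le_two_pow m (m / 2)

lemma cA_zero : cA 0 = 1 := by simp [cA]
lemma cA_one : cA 1 = 1 := by simp [cA]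

open PowerSeries in
lemma cA_gf : (X : PowerSeries ℝ) * (PowerSeries.mk cA * PowerSeries.mk cA) + PowerSeries.mk cA
    = PowerSeries.mk (fun n => (2 : ℝ) ^ n) := by
  set G : PowerSeries ℝ := PowerSeries.mk cA with hG
  set B : PowerSeries ℝ := 1 + C 2 * (X * G) with hB
  have hBz : coeff 0 B = 1 := by simp [hB]
  have hBs : ∀ n, coeff (n + 1) B = 2 * cA n := by
    intro n
    simp [hB, coeff_C_mul, coeff_succ_X_mul, hG, coeff_one]
  have hode : derivative ℝ B - C 4 * (X * (X * derivative ℝ B)) = C 2 * B := by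
    ext n
    rcases n with _ | _ | n
    · rw [map_sub, coeff_C_mul, coeff_C_mul, coeff_zero_X_mul, hBz, coeff_derivative, hBs, cA_zero]
      norm_num
    · rw [map_sub, coeff_C_mul, coeff_C_mul, coeff_succ_X_mul, coeff_zero_X_mul, hBs, coeff_derivative,
        hBs, cA_zero, cA_one]
      norm_num
    · rw [map_sub, coeff_C_mul, coeff_C_mul, coeff_succ_X_mul, coeff_succ_X_mul, hBs, coeff_derivative,
        coeff_derivative, hBs, hBs]
      have := cA_rec n
      push_cast
      linarith
  set Z : PowerSeries ℝ := B * B * (1 - C 2 * X) with hZ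
  have hC4 : (C 4 : PowerSeries ℝ) = C 2 * C 2 := by rw [← map_mul]; norm_num
  have hC2 : (C 2 : PowerSeries ℝ) = 2 := map_ofNat C 2
  have hdZ : derivative ℝ Z + C 2 * (X * derivative ℝ Z) = C 2 * Z := by
    have : derivative ℝ Z = 2 * (B * derivative ℝ B) * (1 - C 2 * X) - C 2 * (B * B) := by
      rw [hZ, Derivation.leibniz, Derivation.leibniz, map_sub, Derivation.leibniz]
      simp [smul_eq_mul, derivative_C, derivative_X]
      ring
    rw [this, hZ]
    rw [hC4, hC2] at hode
    rw [hC2]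
    linear_combination 2 * B * hode
  have hZ0 : coeff 0 Z = 1 := by
    rw [coeff_zero_eq_constantCoeff_apply] at hBz ⊢
    simp [hZ, hBz]
  have hZ1 : coeff 1 Z = 2 := by
    have := congrArg (coeff 0) hdZ
    rw [map_add, coeff_C_mul, coeff_C_mul, coeff_zero_X_mul, hZ0, coeff_derivative] at this
    norm_num at this
    exact this
  have hZr : ∀ n, coeff (n + 2) Z = 0 := by
    intro n
    induction n with
    | zero =>
      have := congrArg (coeff 1) hdZ
      rw [map_add, coeff_C_mul, coeff_C_mul, coeff_succ_X_mul, coeff_derivative, coeff_derivative] at this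
      norm_num at this
      norm_num
      linarith
    | succ n ih =>
      have := congrArg (coeff (n + 2)) hdZ
      rw [map_add, coeff_C_mul, coeff_C_mul, coeff_succ_X_mul, coeff_derivative, coeff_derivative] at this
      have e : n + 1 + 1 = n + 2 := rfl
      rw [e, ih] at this
      push_cast at this
      have h3 : coeff (n + 2 + 1) Z * ((n : ℝ) + 2 + 1) = 0 := by linarith
      have h4 : ((n : ℝ) + 2 + 1) ≠ 0 := by positivity
      have := (mul_eq_zero.mp h3).resolve_right h4
      convert this using 2
  have hZe : Z = 1 + C 2 * X := by
    ext n
    rcases n with _ | _ | n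
    · rw [hZ0]; simp
    · rw [zero_add, hZ1]; simp [coeff_one, coeff_C_mul]
    · rw [hZr]; simp [coeff_one, coeff_C_mul, coeff_X]
  have hP : PowerSeries.mk (fun n => (2 : ℝ) ^ n) * (1 - C 2 * X) = 1 := by
    ext n
    have : PowerSeries.mk (fun n => (2 : ℝ) ^ n) * (1 - C 2 * X)
      = PowerSeries.mk (fun n => (2 : ℝ) ^ n) - C 2 * (X * PowerSeries.mk (fun n => (2 : ℝ) ^ n)) := by
      ring
    rw [this]
    rcases n with _ | n
    · simp
    · rw [map_sub, coeff_C_mul, coeff_succ_X_mul]; simp [coeff_one]; ring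
  have hne : (1 - C 2 * X : PowerSeries ℝ) ≠ 0 := by
    intro h
    rw [h, mul_zero] at hP
    exact zero_ne_one hP
  have h4X : (4 * X : PowerSeries ℝ) ≠ 0 := by
    intro h
    have := congrArg (coeff 1) h
    have e4 : (4 : PowerSeries ℝ) = C 4 := (map_ofNat C 4).symm
    rw [e4, coeff_C_mul] at this
    simp at this
  apply mul_right_cancel₀ hne
  apply mul_left_cancel₀ h4X
  rw [hP]
  rw [hZ, hB, hC2] at hZe
  rw [hC2]
  linear_combination hZe

lemma cA_conv (m : ℕ) :
    ∑ p ∈ Finset.HasAntidiagonal.antidiagonal m, cA p.1 * cA p.2 = 2 ^ (m + 1) - cA (m + 1) := by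
  have := congrArg (PowerSeries.coeff (m + 1)) cA_gf
  rw [map_add, PowerSeries.coeff_succ_X_mul, PowerSeries.coeff_mul] at this
  simp only [PowerSeries.coeff_mk] at this
  linarith

noncomputable def cT (u : ℝ) (m : ℕ) : ℝ := 2 * cA m * u ^ m / (m.factorial : ℝ)

lemma cT_summable_norm (u : ℝ) : Summable (fun m => ‖cT u m‖) := by
  refine Summable.of_nonneg_of_le (fun _ => norm_nonneg _) (fun m => ?_)
    ((Real.summable_pow_div_factorial (2 * |u|)).mul_left 2)
  unfold cT
  rw [norm_div, norm_mul, norm_mul, norm_pow, Real.norm_of_nonneg (cA_nonneg m), mul_pow]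
  simp only [Real.norm_eq_abs, Nat.abs_cast, abs_two]
  have := cA_le m
  rw [mul_assoc, mul_div_assoc]
  gcongr

lemma cT_summable (u : ℝ) : Summable (cT u) := (cT_summable_norm u).of_norm

lemma cbinom_eq (u : ℝ) : cbinom (2 * u) u = ∑' m, cT u m := by
  have he : Summable (fun k => cT u (2 * k)) :=
    (cT_summable u).comp_injective (fun a b h => by simpa using h)
  have ho : Summable (fun k => cT u (2 * k + 1)) :=
    (cT_summable u).comp_injective (fun a b h => by simpa using h)
  rw [← tsum_even_add_odd he ho, ← he.tsum_add ho]
  unfold cbinom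
  congr 1
  ext n
  have h1 : cA (2 * n) * ((n.factorial : ℝ)) ^ 2 = ((2 * n).factorial : ℝ) := by
    unfold cA
    rw [show 2 * n / 2 = n by omega]
    have := Nat.choose_mul_factorial_mul_factorial (n := 2 * n) (k := n) (by omega)
    rw [show 2 * n - n = n by omega] at this
    rw [← this]; push_cast; ring
  have h2 : cA (2 * n + 1) * ((n.factorial : ℝ) * ((n + 1).factorial : ℝ))
      = ((2 * n + 1).factorial : ℝ) := by
    unfold cA
    rw [show (2 * n + 1) / 2 = n by omega]
    have := Nat.choose_mul_factorial_mul_factorial (n := 2 * n + 1) (k := n) (by omega)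
    rw [show 2 * n + 1 - n = n + 1 by omega] at this
    rw [← this]; push_cast; ring
  have f0 : (n.factorial : ℝ) ≠ 0 := by positivity
  have f1 : ((n + 1).factorial : ℝ) ≠ 0 := by positivity
  have f2 : ((2 * n).factorial : ℝ) ≠ 0 := by positivity
  have f3 : ((2 * n + 1).factorial : ℝ) ≠ 0 := by positivity
  have g1 : cA (2 * n) / ((2 * n).factorial : ℝ) = 1 / ((n.factorial : ℝ)) ^ 2 := by
    rw [div_eq_div_iff f2 (by positivity)]; linarith
  have g2 : cA (2 * n + 1) / ((2 * n + 1).factorial : ℝ)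
      = 1 / ((n.factorial : ℝ) * ((n + 1).factorial : ℝ)) := by
    rw [div_eq_div_iff f3 (by positivity)]; linarith
  have t1 : cT u (2 * n) = 2 * u ^ (2 * n) * (cA (2 * n) / ((2 * n).factorial : ℝ)) := by
    unfold cT; ring
  have t2 : cT u (2 * n + 1)
      = 2 * u ^ (2 * n + 1) * (cA (2 * n + 1) / ((2 * n + 1).factorial : ℝ)) := by
    unfold cT; ring
  rw [t1, t2, g1, g2, show u * (2 * u - u) = u ^ 2 by ring, ← pow_mul]
  ring

lemma beta_int (s : ℝ) (b : ℕ) : ∀ a : ℕ,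
    ∫ u in (0 : ℝ)..s, (u ^ a / (a.factorial : ℝ)) * ((s - u) ^ b / (b.factorial : ℝ))
      = s ^ (a + b + 1) / ((a + b + 1).factorial : ℝ) := by
  induction b with
  | zero =>
    intro a
    simp [Nat.factorial_succ, integral_pow]
    field_simp
  | succ b ih =>
    intro a
    have key := intervalIntegral.integral_mul_deriv_eq_deriv_mul (a := 0) (b := s)
      (u := fun u : ℝ => (s - u) ^ (b + 1) / ((b + 1).factorial : ℝ))
      (v := fun u : ℝ => u ^ (a + 1) / ((a + 1).factorial : ℝ))
      (u' := fun u : ℝ => -((s - u) ^ b / (b.factorial : ℝ)))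
      (v' := fun u : ℝ => u ^ a / (a.factorial : ℝ))
      (fun x _ => by
        have := ((((hasDerivAt_id x).const_sub s).pow (b + 1)).div_const ((b + 1).factorial : ℝ))
        convert this using 1
        · rfl
        · rw [Nat.factorial_succ]
          push_cast
          simp only [id, Nat.add_sub_cancel]
          field_simp)
      (fun x _ => by
        have := (((hasDerivAt_id x).pow (a + 1)).div_const ((a + 1).factorial : ℝ))
        convert this using 1
        · rfl
        · rw [Nat.factorial_succ]
          push_cast
          simp only [id, Nat.add_sub_cancel]
          field_simp)
      (Continuous.intervalIntegrable (by fun_prop) _ _)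
      (Continuous.intervalIntegrable (by fun_prop) _ _)
    have h := ih (a + 1)
    have e : a + (b + 1) + 1 = a + 1 + b + 1 := by ring
    rw [e, ← h]
    simp only [mul_comm] at key ⊢
    rw [key]
    simp

theorem central_cbinom_convolution (s : ℝ) (hs : 0 ≤ s) :
    (∫ u in (0 : ℝ)..s, cbinom (2 * u) u * cbinom (2 * (s - u)) (s - u)) =
      4 * Real.exp (2 * s) - 2 * cbinom (2 * s) s := by
  have hsn := cT_summable_norm s
  have hss := cT_summable s
  have hmono : ∀ t, 0 ≤ t → t ≤ s → ∀ m, ‖cT t m‖ ≤ ‖cT s m‖ := by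
    intro t h0 h1 m
    have := cA_nonneg m
    unfold cT
    rw [Real.norm_of_nonneg (by positivity), Real.norm_of_nonneg (by positivity)]
    gcongr
  have hI : HasSum (fun p : ℕ × ℕ => ∫ u in (0 : ℝ)..s, cT u p.1 * cT (s - u) p.2)
      (∫ u in (0 : ℝ)..s, cbinom (2 * u) u * cbinom (2 * (s - u)) (s - u)) := by
    refine intervalIntegral.hasSum_integral_of_dominated_convergence
      (fun p _ => ‖cT s p.1‖ * ‖cT s p.2‖) ?_ ?_ ?_ ?_ ?_
    · intro p
      apply Continuous.aestronglyMeasurable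
      unfold cT
      fun_prop
    · intro p
      refine MeasureTheory.ae_of_all _ fun t ht => ?_
      rw [Set.uIoc_of_le hs] at ht
      rw [norm_mul]
      exact mul_le_mul (hmono t ht.1.le ht.2 _) (hmono (s - t) (by linarith [ht.2]) (by linarith [ht.1]) _)
        (norm_nonneg _) (norm_nonneg _)
    · exact MeasureTheory.ae_of_all _ fun t ht =>
        hsn.mul_of_nonneg hsn (fun _ => norm_nonneg _) (fun _ => norm_nonneg _)
    · exact intervalIntegrable_const
    · refine MeasureTheory.ae_of_all _ fun t ht => ?_
      rw [cbinom_eq, cbinom_eq]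
      exact (cT_summable t).hasSum.mul (cT_summable (s - t)).hasSum
        (summable_mul_of_summable_norm (cT_summable_norm t) (cT_summable_norm (s - t)))
  have hval : ∀ p : ℕ × ℕ, ∫ u in (0 : ℝ)..s, cT u p.1 * cT (s - u) p.2
      = 4 * (cA p.1 * cA p.2) * (s ^ (p.1 + p.2 + 1) / ((p.1 + p.2 + 1).factorial : ℝ)) := by
    intro p
    rw [← beta_int, ← intervalIntegral.integral_const_mul]
    congr 1
    ext u
    unfold cT
    ring
  simp only [hval] at hI
  rw [← Finset.HasAntidiagonal.sigmaAntidiagonalEquivProd.hasSum_iff] at hI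
  have hI2 := hI.sigma (fun m => hasSum_fintype _)
  have hterm : ∀ m : ℕ, ∑ p : Finset.HasAntidiagonal.antidiagonal m,
      ((fun p : ℕ × ℕ => 4 * (cA p.1 * cA p.2) *
        (s ^ (p.1 + p.2 + 1) / ((p.1 + p.2 + 1).factorial : ℝ))) ∘
        Finset.HasAntidiagonal.sigmaAntidiagonalEquivProd) ⟨m, p⟩
      = 4 * ((2 * s) ^ (m + 1) / ((m + 1).factorial : ℝ)) - 2 * cT s (m + 1) := by
    intro m
    have : ∀ p : Finset.HasAntidiagonal.antidiagonal m, ((fun p : ℕ × ℕ => 4 * (cA p.1 * cA p.2) *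
        (s ^ (p.1 + p.2 + 1) / ((p.1 + p.2 + 1).factorial : ℝ))) ∘
        Finset.HasAntidiagonal.sigmaAntidiagonalEquivProd) ⟨m, p⟩ =
        (fun q : ℕ × ℕ => (cA q.1 * cA q.2) * (4 * (s ^ (m + 1) / ((m + 1).factorial : ℝ)))) p := by
      intro p
      have hp := Finset.HasAntidiagonal.mem_antidiagonal.mp p.2
      simp only [Function.comp, Finset.HasAntidiagonal.sigmaAntidiagonalEquivProd_apply]
      rw [hp]
      ring
    rw [Finset.sum_congr rfl (fun p _ => this p), Finset.sum_coe_sort (Finset.HasAntidiagonal.antidiagonal m)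
      (fun q : ℕ × ℕ => (cA q.1 * cA q.2) * (4 * (s ^ (m + 1) / ((m + 1).factorial : ℝ)))),
      ← Finset.sum_mul, cA_conv]
    unfold cT
    rw [mul_pow]
    ring
  simp only [hterm] at hI2
  have hexp : HasSum (fun m : ℕ => (2 * s) ^ m / (m.factorial : ℝ)) (Real.exp (2 * s)) := by
    rw [Real.exp_eq_exp_ℝ]
    exact NormedSpace.expSeries_div_hasSum_exp (2 * s)
  have hR : HasSum (fun m : ℕ => 4 * ((2 * s) ^ m / (m.factorial : ℝ)) - 2 * cT s m)
      (4 * Real.exp (2 * s) - 2 * cbinom (2 * s) s) := by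
    rw [cbinom_eq]
    exact (hexp.mul_left 4).sub (hss.hasSum.mul_left 2)
  have hR2 := (hasSum_nat_add_iff' 1).mpr hR
  have := hI2.unique hR2
  rw [this]
  simp [cT, cA_zero]
  norm_num
end

section
/- For all real numbers x ≥ 0, 0 < p < 1, and u, the moment generating function of the continuous binomial distribution satisfies (∫_{0}^{x} e^{us} {x choose s} p^s (1−p)^{x−s} ds) / (∫_{0}^{x} {x choose s} p^s (1−p)^{x−s} ds) = e^{ux/2} · φ_{x,p}(u)/φ_{x,p}(0), where φ_{x,p}(u) = cosh((x/2)√(4 + (u+L)²)) − cosh((x/2)(u+L)) + (2/√(4 + (u+L)²)) sinh((x/2)√(4 + (u+L)²)) and L = log(p/(1−p)). -/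
/-- The auxiliary function `φ_{x,p}(u)` appearing in the moment generating function of
the continuous binomial distribution. -/
noncomputable def phiCB (x p u : ℝ) : ℝ :=
  Real.cosh (x / 2 * Real.sqrt (4 + (u + Real.log (p / (1 - p))) ^ 2)) -
    Real.cosh (x / 2 * (u + Real.log (p / (1 - p)))) +
    2 / Real.sqrt (4 + (u + Real.log (p / (1 - p))) ^ 2) *
      Real.sinh (x / 2 * Real.sqrt (4 + (u + Real.log (p / (1 - p))) ^ 2))


open Finset in
lemma cb_int (a : ℝ) (n : ℕ) : ∀ k : ℕ, ∫ t in (-a)..a, t ^ (2 * k) * (a ^ 2 - t ^ 2) ^ n =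
    a ^ (2 * (n + k) + 1) * ((2 * k).factorial * 4 ^ (n + 1) * (n + k + 1).factorial * n.factorial
      / (k.factorial * (2 * (n + k) + 2).factorial)) := by
  induction n with
  | zero =>
    intro k
    have h1 : ((2 * k + 1 : ℕ) : ℝ) ≠ 0 := by positivity
    have hk : (k.factorial : ℝ) ≠ 0 := by positivity
    have hk2 : ((2 * k).factorial : ℝ) ≠ 0 := by positivity
    have e : (2 * (0 + k) + 2).factorial = (2 * k + 2) * ((2 * k + 1) * (2 * k).factorial) := by
      rw [zero_add, Nat.factorial_succ, Nat.factorial_succ]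
    have e2 : (0 + k + 1).factorial = (k + 1) * k.factorial := by
      rw [zero_add, Nat.factorial_succ]
    rw [e, e2]
    simp only [pow_zero, mul_one, integral_pow]
    have h3 : (-a) ^ (2 * k + 1) = - a ^ (2 * k + 1) := Odd.neg_pow ⟨k, rfl⟩ a
    rw [h3]
    push_cast
    rw [zero_add]
    simp only [Nat.factorial_zero]
    push_cast
    field_simp
    ring
  | succ n ih =>
    intro k
    have e0 : ∀ t : ℝ, t ^ (2 * k) * (a ^ 2 - t ^ 2) ^ (n + 1) =
        a ^ 2 * (t ^ (2 * k) * (a ^ 2 - t ^ 2) ^ n)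
          - t ^ (2 * (k + 1)) * (a ^ 2 - t ^ 2) ^ n := by
      intro t; ring
    simp only [e0]
    rw [intervalIntegral.integral_sub, intervalIntegral.integral_const_mul, ih, ih]
    · have f1 : (n + 1 + k + 1).factorial = (n + k + 2) * (n + k + 1).factorial := by
        rw [show n + 1 + k + 1 = (n + k + 1) + 1 by ring, Nat.factorial_succ]
      have f2 : (n + (k + 1) + 1).factorial = (n + k + 2) * (n + k + 1).factorial := by
        rw [show n + (k + 1) + 1 = (n + k + 1) + 1 by ring, Nat.factorial_succ]
      have f3 : (2 * (n + 1 + k) + 2).factorial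
          = (2 * (n + k) + 4) * ((2 * (n + k) + 3) * (2 * (n + k) + 2).factorial) := by
        rw [show 2 * (n + 1 + k) + 2 = 2 * (n + k) + 2 + 1 + 1 by ring, Nat.factorial_succ,
          Nat.factorial_succ]
      have f4 : (2 * (n + (k + 1)) + 2).factorial
          = (2 * (n + k) + 4) * ((2 * (n + k) + 3) * (2 * (n + k) + 2).factorial) := by
        rw [show 2 * (n + (k + 1)) + 2 = 2 * (n + k) + 2 + 1 + 1 by ring, Nat.factorial_succ,
          Nat.factorial_succ]
      have f5 : (2 * (k + 1)).factorial = (2 * k + 2) * ((2 * k + 1) * (2 * k).factorial) := by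
        rw [show 2 * (k + 1) = 2 * k + 1 + 1 by ring, Nat.factorial_succ, Nat.factorial_succ]
      rw [f1, f2, f3, f4, f5, Nat.factorial_succ n, Nat.factorial_succ k,
        show 2 * (n + (k + 1)) + 1 = 2 * (n + k) + 1 + 2 by ring,
        show 2 * (n + 1 + k) + 1 = 2 * (n + k) + 1 + 2 by ring, pow_add a (2 * (n + k) + 1) 2]
      have g1 : (k.factorial : ℝ) ≠ 0 := by positivity
      have g2 : ((2 * (n + k) + 2).factorial : ℝ) ≠ 0 := by positivity
      generalize ((2 * (n + k) + 2).factorial) = A at *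
      generalize ((n + k + 1).factorial) = B at *
      generalize ((2 * k).factorial) = C at *
      generalize (k.factorial) = D at *
      generalize (n.factorial) = E at *
      generalize a ^ (2 * (n + k) + 1) = F at *
      push_cast
      rw [pow_succ 4 (n+1)]
      generalize (4 : ℝ) ^ (n + 1) = G at *
      have g3 : (2 * ((n : ℝ) + k) + 4) ≠ 0 := by positivity
      have g4 : (2 * ((n : ℝ) + k) + 3) ≠ 0 := by positivity
      have g5 : ((k : ℝ) + 1) ≠ 0 := by positivity
      field_simp
      ring
    · exact (by fun_prop : Continuous fun t : ℝ => a ^ 2 * (t ^ (2 * k) * (a ^ 2 - t ^ 2) ^ n)).intervalIntegrable _ _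
    · exact (by fun_prop : Continuous fun t : ℝ => t ^ (2 * (k + 1)) * (a ^ 2 - t ^ 2) ^ n).intervalIntegrable _ _

noncomputable def cbc (x : ℝ) (n : ℕ) : ℝ :=
  2 / ((n.factorial : ℝ)) ^ 2 + x / ((n.factorial : ℝ) * ((n + 1).factorial : ℝ))

lemma cbc_nonneg (x : ℝ) (hx : 0 ≤ x) (n : ℕ) : 0 ≤ cbc x n := by
  unfold cbc; positivity

lemma cbc_summable (x : ℝ) (hx : 0 ≤ x) (y : ℝ) (hy : 0 ≤ y) :
    Summable (fun n => y ^ n * cbc x n) := by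
  refine Summable.of_nonneg_of_le (fun n => mul_nonneg (pow_nonneg hy n) (cbc_nonneg x hx n)) ?_
    ((Real.summable_pow_div_factorial y).mul_left (2 + x))
  intro n
  have h1 : (1 : ℝ) ≤ n.factorial := by exact_mod_cast n.factorial_pos
  have h2 : (1 : ℝ) ≤ (n + 1).factorial := by exact_mod_cast (n + 1).factorial_pos
  have h : cbc x n ≤ (2 + x) / n.factorial := by
    unfold cbc
    rw [add_div]
    gcongr
    · nlinarith
    · nlinarith
  calc y ^ n * cbc x n ≤ y ^ n * ((2 + x) / n.factorial) := by gcongr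
    _ = _ := by ring

open Finset in
noncomputable def cbf (a v : ℝ) (N : ℕ) (t : ℝ) : ℝ :=
  ∑ q ∈ antidiagonal N, ((a ^ 2 - t ^ 2) ^ q.1 * cbc (2 * a) q.1) *
    ((v * t) ^ (2 * q.2) / (2 * q.2).factorial)

open Finset in
lemma cbf_integral (a v : ℝ) (N : ℕ) : ∫ t in (-a)..a, cbf a v N t =
    4 * (a ^ (2 * N + 1) * (4 + v ^ 2) ^ N / (2 * N + 1).factorial) +
    2 * (a ^ (2 * (N + 1)) / (2 * (N + 1)).factorial * ((4 + v ^ 2) ^ (N + 1) - (v ^ 2) ^ (N + 1))) := by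
  unfold cbf
  rw [intervalIntegral.integral_finsetSum]
  swap
  · intro q _
    exact (by fun_prop : Continuous fun t : ℝ => ((a ^ 2 - t ^ 2) ^ q.1 * cbc (2 * a) q.1) *
      ((v * t) ^ (2 * q.2) / (2 * q.2).factorial)).intervalIntegrable _ _
  have key : ∀ q ∈ antidiagonal N, ∫ t in (-a)..a, ((a ^ 2 - t ^ 2) ^ q.1 * cbc (2 * a) q.1) *
      ((v * t) ^ (2 * q.2) / (2 * q.2).factorial) =
      4 * (a ^ (2 * N + 1) / (2 * N + 1).factorial) * (4 ^ q.1 * (v ^ 2) ^ q.2 * (N.choose q.1 : ℝ)) +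
      2 * (a ^ (2 * (N + 1)) / (2 * (N + 1)).factorial) *
        (4 ^ (q.1 + 1) * (v ^ 2) ^ q.2 * ((N + 1).choose (q.1 + 1) : ℝ)) := by
    rintro ⟨n, k⟩ hq
    rw [HasAntidiagonal.mem_antidiagonal] at hq
    simp only at hq ⊢
    subst hq
    have e : ∀ t : ℝ, ((a ^ 2 - t ^ 2) ^ n * cbc (2 * a) n) *
      ((v * t) ^ (2 * k) / (2 * k).factorial) = (cbc (2 * a) n * v ^ (2 * k) / (2 * k).factorial) *
        (t ^ (2 * k) * (a ^ 2 - t ^ 2) ^ n) := by intro t; rw [mul_pow]; ring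
    simp only [e]
    rw [intervalIntegral.integral_const_mul, cb_int, Nat.cast_add_choose,
      show n + k + 1 = (n + 1) + k by ring, Nat.cast_add_choose]
    unfold cbc
    have f1 : (n + 1 + k).factorial = (n + k + 1) * (n + k).factorial := by
      rw [show n + 1 + k = (n + k) + 1 by ring, Nat.factorial_succ]
    have f2 : (2 * (n + k) + 2).factorial = (2 * (n + k) + 2) * (2 * (n + k) + 1).factorial := by
      rw [Nat.factorial_succ]
    have f3 : (2 * (n + 1 + k)).factorial = (2 * (n + k) + 2) * (2 * (n + k) + 1).factorial := by
      rw [show 2 * (n + 1 + k) = 2 * (n + k) + 1 + 1 by ring, Nat.factorial_succ]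
    rw [f1, f2, f3, show 2 * (n + 1 + k) = 2 * (n + k) + 1 + 1 by ring, Nat.factorial_succ n,
      pow_succ a (2 * (n + k) + 1), pow_mul v 2 k, pow_succ 4 n]
    have g1 : (k.factorial : ℝ) ≠ 0 := by positivity
    have g2 : ((2 * (n + k) + 1).factorial : ℝ) ≠ 0 := by positivity
    have g3 : (n.factorial : ℝ) ≠ 0 := by positivity
    have g4 : ((2 * k).factorial : ℝ) ≠ 0 := by positivity
    have g5 : ((n : ℝ) + 1) ≠ 0 := by positivity
    have g6 : ((n : ℝ) + k + 1) ≠ 0 := by positivity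
    generalize ((2 * (n + k) + 1).factorial) = A at *
    generalize ((n + k).factorial) = B at *
    generalize ((2 * k).factorial) = C at *
    generalize (k.factorial) = D at *
    generalize (n.factorial) = E at *
    generalize a ^ (2 * (n + k) + 1) = F at *
    generalize (v ^ 2) ^ k = H at *
    generalize (4 : ℝ) ^ n = G at *
    push_cast
    have g7 : (2 * ((n : ℝ) + k) + 2) = 2 * ((n : ℝ) + k + 1) := by ring
    rw [g7]
    field_simp
  rw [sum_congr rfl key, sum_add_distrib, ← mul_sum, ← mul_sum]
  have s1 : ∑ q ∈ antidiagonal N, ((4 : ℝ) ^ q.1 * (v ^ 2) ^ q.2 * (N.choose q.1 : ℝ))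
      = (4 + v ^ 2) ^ N := by
    rw [add_pow, Nat.sum_antidiagonal_eq_sum_range_succ
      (fun i j => (4 : ℝ) ^ i * (v ^ 2) ^ j * (N.choose i : ℝ))]
  have s2 : ∑ q ∈ antidiagonal N, ((4 : ℝ) ^ (q.1 + 1) * (v ^ 2) ^ q.2 *
      ((N + 1).choose (q.1 + 1) : ℝ)) = (4 + v ^ 2) ^ (N + 1) - (v ^ 2) ^ (N + 1) := by
    rw [add_pow, sum_range_succ', Nat.sum_antidiagonal_eq_sum_range_succ
      (fun i j => (4 : ℝ) ^ (i + 1) * (v ^ 2) ^ j * ((N + 1).choose (i + 1) : ℝ))]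
    simp
  rw [s1, s2]
  ring

open Finset in
lemma cb_pt (a v t : ℝ) (ha : 0 ≤ a) (h0 : 0 ≤ a ^ 2 - t ^ 2) :
    HasSum (fun N => cbf a v N t)
      ((∑' n : ℕ, (a ^ 2 - t ^ 2) ^ n * cbc (2 * a) n) * Real.cosh (v * t)) := by
  have hA' := cbc_summable (2 * a) (by positivity) (a ^ 2 - t ^ 2) h0
  have hB' := (Real.hasSum_cosh (v * t)).summable
  have hBn : ∀ (k : ℕ), 0 ≤ (v * t) ^ (2 * k) / ((2 * k).factorial : ℝ) := fun k => by
    rw [pow_mul]; positivity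
  have hAn : ∀ n, 0 ≤ (a ^ 2 - t ^ 2) ^ n * cbc (2 * a) n := fun n =>
    mul_nonneg (pow_nonneg h0 n) (cbc_nonneg _ (by positivity) n)
  have hm0 := hA'.mul_of_nonneg hB' hAn hBn
  rw [← (Real.hasSum_cosh (v * t)).tsum_eq]
  unfold cbf
  generalize hf : (fun n => (a ^ 2 - t ^ 2) ^ n * cbc (2 * a) n) = f at *
  generalize hg : (fun k => (v * t) ^ (2 * k) / ((2 * k).factorial : ℝ)) = g at *
  have e : (fun N => ∑ q ∈ antidiagonal N, ((a ^ 2 - t ^ 2) ^ q.1 * cbc (2 * a) q.1) *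
    ((v * t) ^ (2 * q.2) / ((2 * q.2).factorial : ℝ))) =
      fun N => ∑ q ∈ antidiagonal N, f q.1 * g q.2 := by
    subst hf hg; rfl
  have hm : Summable (fun x : ℕ × ℕ => f x.1 * g x.2) := by
    subst hf hg; exact hm0
  rw [e]
  have hs : Summable (fun N => ∑ q ∈ antidiagonal N, f q.1 * g q.2) :=
    summable_sum_mul_antidiagonal_of_summable_mul hm
  rw [hA'.tsum_mul_tsum_eq_tsum_sum_antidiagonal hB' hm]
  exact hs.hasSum

open Finset in
lemma cb_hasSum (a v : ℝ) (ha : 0 ≤ a) :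
    HasSum (fun N => ∫ t in (-a)..a, cbf a v N t)
      (∫ t in (-a)..a, (∑' n : ℕ, (a ^ 2 - t ^ 2) ^ n * cbc (2 * a) n) * Real.cosh (v * t)) := by
  have hA := cbc_summable (2 * a) (by positivity) (a ^ 2) (by positivity)
  have hB := (Real.hasSum_cosh (v * a)).summable
  have hBn : ∀ (y : ℝ) (k : ℕ), 0 ≤ (y) ^ (2 * k) / ((2 * k).factorial : ℝ) := fun y k => by
    rw [pow_mul]; positivity
  have hAn : ∀ y : ℝ, 0 ≤ y → ∀ n, 0 ≤ y ^ n * cbc (2 * a) n := fun y hy n =>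
    mul_nonneg (pow_nonneg hy n) (cbc_nonneg _ (by positivity) n)
  have hbd : Summable (fun N => ∑ q ∈ antidiagonal N, ((a ^ 2) ^ q.1 * cbc (2 * a) q.1) *
      ((v * a) ^ (2 * q.2) / ((2 * q.2).factorial : ℝ))) :=
    summable_sum_mul_antidiagonal_of_summable_mul (A := ℕ)
    (f := fun n => (a ^ 2) ^ n * cbc (2 * a) n)
    (g := fun k => (v * a) ^ (2 * k) / ((2 * k).factorial : ℝ))
    (hA.mul_of_nonneg hB (hAn _ (by positivity)) (hBn (v * a)))
  refine intervalIntegral.hasSum_integral_of_dominated_convergence (fun N _ =>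
    ∑ q ∈ antidiagonal N, ((a ^ 2) ^ q.1 * cbc (2 * a) q.1) *
      ((v * a) ^ (2 * q.2) / (2 * q.2).factorial)) ?_ ?_ ?_ ?_ ?_
  · intro N
    refine Continuous.aestronglyMeasurable ?_
    unfold cbf
    fun_prop
  · intro N
    refine Filter.Eventually.of_forall fun t ht => ?_
    rw [Set.uIoc_of_le (by linarith)] at ht
    have ht2 : t ^ 2 ≤ a ^ 2 := by nlinarith [ht.1, ht.2]
    have h0 : 0 ≤ a ^ 2 - t ^ 2 := by linarith
    unfold cbf
    rw [Real.norm_of_nonneg (sum_nonneg fun q _ => mul_nonneg (hAn _ h0 _) (hBn _ _))]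
    refine sum_le_sum fun q _ => ?_
    have := cbc_nonneg (2 * a) (by positivity) q.1
    refine mul_le_mul ?_ ?_ (hBn _ _) (hAn _ (by positivity) _)
    · gcongr
      nlinarith [sq_nonneg t]
    · rw [pow_mul, pow_mul, mul_pow v t, mul_pow v a]
      gcongr
  · exact Filter.Eventually.of_forall fun t ht => hbd
  · exact intervalIntegrable_const
  · refine Filter.Eventually.of_forall fun t ht => ?_
    rw [Set.uIoc_of_le (by linarith)] at ht
    have h0 : 0 ≤ a ^ 2 - t ^ 2 := by nlinarith [ht.1, ht.2]
    exact cb_pt a v t ha h0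

open Finset in
lemma cb_core (a v : ℝ) (ha : 0 ≤ a) :
    ∫ t in (-a)..a, (∑' n : ℕ, (a ^ 2 - t ^ 2) ^ n * cbc (2 * a) n) * Real.cosh (v * t) =
    2 * (Real.cosh (a * Real.sqrt (4 + v ^ 2)) - Real.cosh (a * v) +
      2 / Real.sqrt (4 + v ^ 2) * Real.sinh (a * Real.sqrt (4 + v ^ 2))) := by
  have H := cb_hasSum a v ha
  set r := Real.sqrt (4 + v ^ 2) with hr
  have hr2 : 4 + v ^ 2 = r ^ 2 := (Real.sq_sqrt (by positivity)).symm
  have hr0 : 0 < r := Real.sqrt_pos.2 (by positivity)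
  have hc : ∀ y : ℝ, HasSum (fun N : ℕ => y ^ (2 * (N + 1)) / ((2 * (N + 1)).factorial : ℝ))
      (Real.cosh y - 1) := by
    intro y
    have := (hasSum_nat_add_iff' 1).2 (Real.hasSum_cosh y)
    simpa using this
  have H2 := ((Real.hasSum_sinh (a * r)).mul_left (4 / r)).add
    (((hc (a * r)).sub (hc (a * v))).mul_left 2)
  have H3 : HasSum (fun N => ∫ t in (-a)..a, cbf a v N t)
      (4 / r * Real.sinh (a * r) + 2 * (Real.cosh (a * r) - 1 - (Real.cosh (a * v) - 1))) := by
    refine Eq.subst (motive := fun F => HasSum F _) (funext fun N => ?_) H2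
    symm
    rw [cbf_integral, hr2, ← pow_mul, ← pow_mul, ← pow_mul, mul_pow, mul_pow, mul_pow, pow_succ r (2 * N)]
    field_simp
  rw [H.unique H3]
  ring

lemma cbinom_cont (x : ℝ) (hx : 0 ≤ x) : ContinuousOn (cbinom x) (Set.Icc 0 x) := by
  unfold cbinom
  refine continuousOn_tsum (u := fun n => (x ^ 2) ^ n * cbc x n) ?_
    (cbc_summable x hx (x ^ 2) (by positivity)) ?_
  · intro n; fun_prop
  · intro n s hs
    have h0 : 0 ≤ s * (x - s) := mul_nonneg hs.1 (by linarith [hs.2])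
    have h1 : s * (x - s) ≤ x ^ 2 := by nlinarith [hs.1, hs.2]
    have := cbc_nonneg x hx n
    change ‖(s * (x - s)) ^ n * cbc x n‖ ≤ _
    rw [Real.norm_of_nonneg (by positivity)]
    gcongr

lemma cb_main (x v : ℝ) (hx : 0 ≤ x) :
    ∫ s in (0 : ℝ)..x, Real.exp (v * s) * cbinom x s =
    Real.exp (v * x / 2) * (2 * (Real.cosh (x / 2 * Real.sqrt (4 + v ^ 2)) - Real.cosh (x / 2 * v) +
      2 / Real.sqrt (4 + v ^ 2) * Real.sinh (x / 2 * Real.sqrt (4 + v ^ 2)))) := by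
  rw [← cb_core (x / 2) v (by positivity)]
  have hsub := intervalIntegral.integral_comp_sub_left
    (fun s => Real.exp (v * s) * cbinom x s) (a := 0) (b := x) x
  simp only [sub_zero, sub_self] at hsub
  have hsym : ∀ s, cbinom x (x - s) = cbinom x s := by
    intro s; unfold cbinom; congr 1; ext n; congr 2; ring
  simp only [hsym] at hsub
  have hcont := cbinom_cont x hx
  have i1 : IntervalIntegrable (fun s => Real.exp (v * s) * cbinom x s) MeasureTheory.volume 0 x := by
    apply ContinuousOn.intervalIntegrable
    rw [Set.uIcc_of_le hx]
    exact ContinuousOn.mul (by fun_prop) hcont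
  have i2 : IntervalIntegrable (fun s => Real.exp (v * (x - s)) * cbinom x s) MeasureTheory.volume 0 x := by
    apply ContinuousOn.intervalIntegrable
    rw [Set.uIcc_of_le hx]
    exact ContinuousOn.mul (by fun_prop) hcont
  have hadd := intervalIntegral.integral_add i1 i2
  rw [hsub] at hadd
  have hshift := intervalIntegral.integral_comp_add_right
    (fun s => Real.exp (v * s) * cbinom x s + Real.exp (v * (x - s)) * cbinom x s)
    (a := -(x / 2)) (b := x / 2) (x / 2)
  rw [show -(x / 2) + x / 2 = 0 by ring, show x / 2 + x / 2 = x by ring, hadd] at hshift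
  have e : ∀ t : ℝ, Real.exp (v * (t + x / 2)) * cbinom x (t + x / 2) +
      Real.exp (v * (x - (t + x / 2))) * cbinom x (t + x / 2) =
      (2 * Real.exp (v * x / 2)) * ((∑' n : ℕ, ((x / 2) ^ 2 - t ^ 2) ^ n * cbc (2 * (x / 2)) n) *
        Real.cosh (v * t)) := by
    intro t
    have e1 : cbinom x (t + x / 2) = ∑' n : ℕ, ((x / 2) ^ 2 - t ^ 2) ^ n * cbc (2 * (x / 2)) n := by
      unfold cbinom cbc
      congr 1; ext n
      rw [show (t + x / 2) * (x - (t + x / 2)) = (x / 2) ^ 2 - t ^ 2 by ring,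
        show 2 * (x / 2) = x by ring]
    rw [← e1, Real.cosh_eq, show v * (t + x / 2) = v * x / 2 + v * t by ring,
      show v * (x - (t + x / 2)) = v * x / 2 + -(v * t) by ring, Real.exp_add, Real.exp_add]
    ring
  simp only [e] at hshift
  rw [intervalIntegral.integral_const_mul] at hshift
  linarith

lemma cb_full (x p u : ℝ) (hx : 0 ≤ x) (hp : 0 < p) (hp1 : p < 1) :
    (∫ s in (0 : ℝ)..x, Real.exp (u * s) * cbinom x s * p ^ s * (1 - p) ^ (x - s)) =
      2 * (1 - p) ^ x * Real.exp (Real.log (p / (1 - p)) * x / 2) *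
        (Real.exp (u * x / 2) * phiCB x p u) := by
  have hq : 0 < 1 - p := by linarith
  have e : ∀ s : ℝ, Real.exp (u * s) * cbinom x s * p ^ s * (1 - p) ^ (x - s) =
      (1 - p) ^ x * (Real.exp ((u + Real.log (p / (1 - p))) * s) * cbinom x s) := by
    intro s
    rw [Real.rpow_def_of_pos hp, Real.rpow_def_of_pos hq, Real.rpow_def_of_pos hq,
      Real.log_div hp.ne' hq.ne']
    have : Real.exp (u * s) * Real.exp (Real.log p * s) * Real.exp (Real.log (1 - p) * (x - s)) =
      Real.exp (Real.log (1 - p) * x) * Real.exp ((u + (Real.log p - Real.log (1 - p))) * s) := by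
      rw [← Real.exp_add, ← Real.exp_add, ← Real.exp_add]
      congr 1; ring
    linear_combination cbinom x s * this
  simp only [e]
  rw [intervalIntegral.integral_const_mul, cb_main x _ hx]
  unfold phiCB
  rw [show (u + Real.log (p / (1 - p))) * x / 2 = Real.log (p / (1 - p)) * x / 2 + u * x / 2 by ring,
    Real.exp_add]
  ring

theorem cbinom_mgf (x p u : ℝ) (hx : 0 ≤ x) (hp : 0 < p) (hp1 : p < 1) :
    (∫ s in (0 : ℝ)..x, Real.exp (u * s) * cbinom x s * p ^ s * (1 - p) ^ (x - s)) /
        (∫ s in (0 : ℝ)..x, cbinom x s * p ^ s * (1 - p) ^ (x - s)) =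
      Real.exp (u * x / 2) * (phiCB x p u / phiCB x p 0) := by
  have h0 := cb_full x p 0 hx hp hp1
  simp only [zero_mul, zero_div, Real.exp_zero, one_mul] at h0
  rw [h0, cb_full x p u hx hp hp1]
  have hq : 0 < (1 - p) ^ x := Real.rpow_pos_of_pos (by linarith) x
  have hne : 2 * (1 - p) ^ x * Real.exp (Real.log (p / (1 - p)) * x / 2) ≠ 0 := by positivity
  rw [mul_div_mul_left _ _ hne, mul_div_assoc]
end
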